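/- arXiv:1205.5847 — 3 statements merged into one kernel-verified Lean document; each statement's English description precedes it below -/
import Mathlib

section
/- Let λ be a colored ℓ-multi-partition with coloring p : {1,…,ℓ} → ℤ/n and let ξ be a slope datum. If there exist ī ∈ ℤ/n, a removable ī-node r of λ and an addable ī-node a of λ such that h^ξ(r) + ξ_Ω + ξ_Ω̄ > h^ξ(a) > h^ξ(r), then λ admits a ξ-illegal triple; equivalently, λ is not ξ-regular. (Lemma 7.1 of the paper.) -/
open scoped Classical

/-- A partition: `part m` is the `(m+1)`-st part, i.e. `λ_{m+1}`. -/
structure Ptn where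
  part : ℕ → ℕ
  antitone' : ∀ i j : ℕ, i ≤ j → part j ≤ part i
  finite' : ∃ N : ℕ, ∀ i ≥ N, part i = 0

namespace Ptn

/-- `λ_i`, for `i ≥ 1`. -/
def row (q : Ptn) (i : ℕ) : ℕ := q.part (i - 1)

/-- Membership of the box `(i,j)` (boxes have `i, j ≥ 1`). -/
def mem (q : Ptn) (i j : ℕ) : Prop := 1 ≤ i ∧ 1 ≤ j ∧ j ≤ q.row i

/-- The dual partition `λ'_j = #{i ≥ 1 : λ_i ≥ j}`. -/
noncomputable def dual (q : Ptn) (j : ℕ) : ℕ := Nat.card {i : ℕ // 1 ≤ i ∧ j ≤ q.row i}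

/-- `arm_λ(i,j) = λ_i - j`. -/
def arm (q : Ptn) (i j : ℕ) : ℤ := (q.row i : ℤ) - (j : ℤ)

/-- `leg_λ(i,j) = λ'_j - i`. -/
noncomputable def leg (q : Ptn) (i j : ℕ) : ℤ := (q.dual j : ℤ) - (i : ℤ)

/-- `(i,j)` is an addable node of `q`. -/
def Addable (q : Ptn) (i j : ℕ) : Prop :=
  1 ≤ i ∧ 1 ≤ j ∧ q.row i = j - 1 ∧ (i = 1 ∨ j ≤ q.row (i - 1))

/-- `(i,j)` is a removable node of `q`. -/
def Removable (q : Ptn) (i j : ℕ) : Prop :=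
  1 ≤ i ∧ 1 ≤ j ∧ q.row i = j ∧ q.row (i + 1) < j

/-- The partition obtained by adding the box `(i,j)` (when `(i,j)` is addable). -/
noncomputable def addBox (q : Ptn) (i j : ℕ) : Ptn :=
  if h : ∃ q' : Ptn, ∀ m : ℕ, q'.part m = if m = i - 1 then j else q.part m then
    h.choose else q

/-- The partition obtained by removing the box `(i,j)` (when `(i,j)` is removable). -/
noncomputable def removeBox (q : Ptn) (i j : ℕ) : Ptn :=
  if h : ∃ q' : Ptn, ∀ m : ℕ, q'.part m = if m = i - 1 then j - 1 else q.part m then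
    h.choose else q

/-- The empty partition. -/
def empty : Ptn := ⟨fun _ => 0, fun _ _ _ => le_rfl, ⟨0, fun _ _ => rfl⟩⟩

end Ptn
/-- Nodes (triples) `(k; i, j)`. -/
abbrev Node (l : ℕ) := Fin l × ℕ × ℕ

/-- Multi-partitions with `l` components. -/
abbrev MP (l : ℕ) := Fin l → Ptn

/-- The color `p(k) - i + j` of the triple `(k;i,j)`. -/
def colorOf (n l : ℕ) (p : Fin l → ZMod n) (x : Node l) : ZMod n :=
  p x.1 - (x.2.1 : ZMod n) + (x.2.2 : ZMod n)

/-- `(k;i,j)` is a box of the multi-partition `lam`. -/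
def IsBox (l : ℕ) (lam : MP l) (x : Node l) : Prop := (lam x.1).mem x.2.1 x.2.2

/-- `(k;i,j)` is an addable `ib`-node of `lam`. -/
def IsAdd (n l : ℕ) (lam : MP l) (p : Fin l → ZMod n) (ib : ZMod n) (x : Node l) : Prop :=
  (lam x.1).Addable x.2.1 x.2.2 ∧ colorOf n l p x = ib

/-- `(k;i,j)` is a removable `ib`-node of `lam`. -/
def IsRem (n l : ℕ) (lam : MP l) (p : Fin l → ZMod n) (ib : ZMod n) (x : Node l) : Prop :=
  (lam x.1).Removable x.2.1 x.2.2 ∧ colorOf n l p x = ib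

/-- Add the box `x` to the multi-partition `lam`. -/
noncomputable def MPadd {l : ℕ} (lam : MP l) (x : Node l) : MP l :=
  Function.update lam x.1 ((lam x.1).addBox x.2.1 x.2.2)

/-- Remove the box `x` from the multi-partition `lam`. -/
noncomputable def MPremove {l : ℕ} (lam : MP l) (x : Node l) : MP l :=
  Function.update lam x.1 ((lam x.1).removeBox x.2.1 x.2.2)

/-- The empty multi-partition. -/
def MPempty (l : ℕ) : MP l := fun _ => Ptn.empty

/-- A slope datum `(ξ_Ω, ξ_Ω̄, ξ_1, …, ξ_l)` of positive reals. -/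
structure Slope (l : ℕ) where
  xiO : ℝ
  xiObar : ℝ
  xi : Fin l → ℝ
  xiO_pos : 0 < xiO
  xiObar_pos : 0 < xiObar
  xi_pos : ∀ k, 0 < xi k

namespace Slope

/-- The height `h^ξ(k;i,j) = ξ_k + ξ_Ω i + ξ_Ω̄ j`. -/
def h {l : ℕ} (ξ : Slope l) (x : Node l) : ℝ :=
  ξ.xi x.1 + ξ.xiO * (x.2.1 : ℝ) + ξ.xiObar * (x.2.2 : ℝ)

/-- `ξ` is general: distinct triples have distinct heights. -/
def General {l : ℕ} (ξ : Slope l) : Prop :=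
  ∀ x y : Node l, 1 ≤ x.2.1 → 1 ≤ x.2.2 → 1 ≤ y.2.1 → 1 ≤ y.2.2 → ξ.h x = ξ.h y → x = y

/-- `ξ` is aligned: `|ξ_s - ξ_t| < ξ_Ω + ξ_Ω̄` for all `s, t`. -/
def Aligned {l : ℕ} (ξ : Slope l) : Prop :=
  ∀ s t : Fin l, |ξ.xi s - ξ.xi t| < ξ.xiO + ξ.xiObar

/-- `ξ` is integral: all entries are (positive) integers. -/
def Integral {l : ℕ} (ξ : Slope l) : Prop :=
  (∃ m : ℤ, ξ.xiO = (m : ℝ)) ∧ (∃ m : ℤ, ξ.xiObar = (m : ℝ)) ∧ ∀ k, ∃ m : ℤ, ξ.xi k = (m : ℝ)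

end Slope
/-- The triple `((i,j), s, t)` is `ξ`-illegal for `lam`. -/
def Illegal (n l : ℕ) (lam : MP l) (p : Fin l → ZMod n) (ξ : Slope l)
    (i j : ℕ) (s t : Fin l) : Prop :=
  (lam s).mem i j ∧
  (p s - p t + (((lam s).arm i j + (lam t).leg i j + 1 : ℤ) : ZMod n) = 0) ∧
  (-ξ.xiO < ξ.xi t - ξ.xi s + ξ.xiO * (((lam t).leg i j : ℤ) : ℝ)
      - ξ.xiObar * (((lam s).arm i j : ℤ) : ℝ)) ∧
  (ξ.xi t - ξ.xi s + ξ.xiO * (((lam t).leg i j : ℤ) : ℝ)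
      - ξ.xiObar * (((lam s).arm i j : ℤ) : ℝ) < ξ.xiObar)

/-- `lam` is `ξ`-regular: no triple is `ξ`-illegal for `lam`. -/
def Regular (n l : ℕ) (lam : MP l) (p : Fin l → ZMod n) (ξ : Slope l) : Prop :=
  ∀ (i j : ℕ) (s t : Fin l), ¬ Illegal n l lam p ξ i j s t

/-!
Illegality of `((i, j), s, t)` compares two nodes: the end `R` of row `i` of `λ(s)` and the first
position `C` below column `j` of `λ(t)`. Conditions (2) and (3) say exactly that `R` and `C` have
the same color and that `h(R) < h(C) < h(R) + ξ_Ω + ξ_Ω̄`.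

For a removable `r` and an addable `a`, the box in the row of `r` and the column of `a` has
`(R, C) = (r, a)`. The box in the row of `a` and the column of `r` has for `R` the left neighbour
of `a` and for `C` the node below `r`; this lowers both colors by one and turns the bounds on
`h(a) - h(r)` into themselves, reflected about their midpoint. The first box lies in the component
of `r` if the column of `a` is weakly left of that of `r`, and the second lies in the component of
`a` otherwise.
-/

namespace Ptn

variable (q : Ptn) {i j m : ℕ}

lemma row_antitone : Antitone q.row :=
  fun _ _ h => q.antitone' _ _ (Nat.sub_le_sub_right h 1)

lemma exists_forall_le_row_iff (hj : 1 ≤ j) : ∃ m, ∀ i, 1 ≤ i → (j ≤ q.row i ↔ i ≤ m) := by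
  have hex : ∃ m, q.row (m + 1) < j := by
    obtain ⟨N, hN⟩ := q.finite'
    exact ⟨N, (hN N le_rfl).trans_lt hj⟩
  refine ⟨Nat.find hex, fun i hi => ⟨fun hle => ?_, fun hle => ?_⟩⟩
  · by_contra! hlt
    exact (Nat.find_spec hex).not_ge (hle.trans (q.row_antitone hlt))
  · have hmin := Nat.find_min hex (show i - 1 < Nat.find hex by omega)
    rwa [Nat.sub_add_cancel hi, not_lt] at hmin

lemma dual_eq_of_forall_le_row_iff (h : ∀ i, 1 ≤ i → (j ≤ q.row i ↔ i ≤ m)) : q.dual j = m := by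
  have hset : ∀ i, (1 ≤ i ∧ j ≤ q.row i) ↔ i ∈ Finset.Icc 1 m := fun i => by
    rw [Finset.mem_Icc]
    exact and_congr_right (h i)
  rw [dual, Nat.subtype_card _ fun i => (hset i).symm, Nat.card_Icc, Nat.add_sub_cancel]

lemma le_row_iff_le_dual (hi : 1 ≤ i) (hj : 1 ≤ j) : j ≤ q.row i ↔ i ≤ q.dual j := by
  obtain ⟨m, hm⟩ := q.exists_forall_le_row_iff hj
  rw [q.dual_eq_of_forall_le_row_iff hm, hm i hi]

variable {q}

lemma Removable.dual_eq (h : q.Removable i j) : q.dual j = i := by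
  obtain ⟨hi, hj, hrow, hnext⟩ := h
  refine le_antisymm ?_ ((q.le_row_iff_le_dual hi hj).1 hrow.ge)
  rwa [← not_le, q.le_row_iff_le_dual i.succ_pos hj, not_le, Nat.lt_succ_iff] at hnext

lemma Addable.dual_add_one_eq (h : q.Addable i j) : q.dual j + 1 = i := by
  obtain ⟨hi, hj, hrow, hprev⟩ := h
  have hlt : q.dual j < i := by
    rw [← not_le, ← q.le_row_iff_le_dual hi hj]
    omega
  refine le_antisymm hlt ?_
  obtain rfl | hi_one := hi.eq_or_lt
  · omega
  · have hle := (q.le_row_iff_le_dual (show 1 ≤ i - 1 by omega) hj).1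
      (hprev.resolve_left hi_one.ne')
    omega

end Ptn

section

variable {n l : ℕ} {lam : MP l} {p : Fin l → ZMod n} {ξ : Slope l} {i j i' j' : ℕ} {s t : Fin l}

/-- The end `(s; i, λ(s)_i)` of row `i` of the component `s`; it has column `0` if the row is
empty. -/
def rowEnd (lam : MP l) (s : Fin l) (i : ℕ) : Node l := (s, i, (lam s).row i)

/-- The first position `(t; λ(t)'_j + 1, j)` below column `j` of the component `t`. -/
noncomputable def belowCol (lam : MP l) (t : Fin l) (j : ℕ) : Node l := (t, (lam t).dual j + 1, j)

lemma illegal_iff_rowEnd_belowCol :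
    Illegal n l lam p ξ i j s t ↔ (lam s).mem i j ∧
      colorOf n l p (rowEnd lam s i) = colorOf n l p (belowCol lam t j) ∧
      ξ.h (rowEnd lam s i) < ξ.h (belowCol lam t j) ∧
      ξ.h (belowCol lam t j) < ξ.h (rowEnd lam s i) + ξ.xiO + ξ.xiObar := by
  simp only [Illegal, Ptn.arm, Ptn.leg, colorOf, Slope.h, rowEnd, belowCol]
  push_cast
  refine and_congr_right fun _ => and_congr ?_ (and_congr ?_ ?_)
  · rw [← sub_eq_zero (b := p t - _ + _)]
    ring_nf
  all_goals constructor <;> intro h <;> linarith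

lemma not_regular_iff_exists_illegal :
    ¬ Regular n l lam p ξ ↔ ∃ (i j : ℕ) (s t : Fin l), Illegal n l lam p ξ i j s t := by
  simp only [Regular, not_forall, not_not]

lemma Ptn.Removable.rowEnd_eq (h : (lam s).Removable i j) : rowEnd lam s i = (s, i, j) := by
  rw [rowEnd, h.2.2.1]

lemma Ptn.Removable.belowCol_eq (h : (lam s).Removable i j) :
    belowCol lam s j = (s, i + 1, j) := by
  rw [belowCol, h.dual_eq]

lemma Ptn.Addable.rowEnd_eq (h : (lam s).Addable i j) : rowEnd lam s i = (s, i, j - 1) := by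
  rw [rowEnd, h.2.2.1]

lemma Ptn.Addable.belowCol_eq (h : (lam s).Addable i j) : belowCol lam s j = (s, i, j) := by
  rw [belowCol, h.dual_add_one_eq]

lemma colorOf_row_succ : colorOf n l p (s, i + 1, j) = colorOf n l p (s, i, j) - 1 := by
  simp only [colorOf]
  push_cast
  ring

lemma colorOf_col_pred (hj : 1 ≤ j) :
    colorOf n l p (s, i, j - 1) = colorOf n l p (s, i, j) - 1 := by
  simp only [colorOf, Nat.cast_pred hj]
  ring

lemma Slope.h_row_succ : ξ.h (s, i + 1, j) = ξ.h (s, i, j) + ξ.xiO := by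
  simp only [Slope.h]
  push_cast
  ring

lemma Slope.h_col_pred (hj : 1 ≤ j) : ξ.h (s, i, j - 1) = ξ.h (s, i, j) - ξ.xiObar := by
  simp only [Slope.h, Nat.cast_pred hj]
  ring

lemma illegal_of_addable_col_le (hr : (lam s).Removable i j) (ha : (lam t).Addable i' j')
    (hcolor : colorOf n l p (s, i, j) = colorOf n l p (t, i', j'))
    (hlower : ξ.h (s, i, j) < ξ.h (t, i', j'))
    (hupper : ξ.h (t, i', j') < ξ.h (s, i, j) + ξ.xiO + ξ.xiObar) (hle : j' ≤ j) :
    Illegal n l lam p ξ i j' s t := by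
  have hmem : (lam s).mem i j' := ⟨hr.1, ha.2.1, hle.trans_eq hr.2.2.1.symm⟩
  rw [illegal_iff_rowEnd_belowCol, hr.rowEnd_eq, ha.belowCol_eq]
  exact ⟨hmem, hcolor, hlower, hupper⟩

lemma illegal_of_removable_col_lt (hr : (lam s).Removable i j) (ha : (lam t).Addable i' j')
    (hcolor : colorOf n l p (s, i, j) = colorOf n l p (t, i', j'))
    (hlower : ξ.h (s, i, j) < ξ.h (t, i', j'))
    (hupper : ξ.h (t, i', j') < ξ.h (s, i, j) + ξ.xiO + ξ.xiObar) (hlt : j < j') :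
    Illegal n l lam p ξ i' j t s := by
  have hmem : (lam t).mem i' j :=
    ⟨ha.1, hr.2.1, (Nat.le_sub_one_of_lt hlt).trans_eq ha.2.2.1.symm⟩
  rw [illegal_iff_rowEnd_belowCol, ha.rowEnd_eq, hr.belowCol_eq, colorOf_row_succ,
    colorOf_col_pred ha.2.1, Slope.h_row_succ, Slope.h_col_pred ha.2.1]
  exact ⟨hmem, congrArg (· - 1) hcolor.symm, by linarith, by linarith⟩

end

/-- Lemma 7.1: if `lam` has a removable `ib`-node `r` and an addable `ib`-node `a`
with `h(r) + ξ_Ω + ξ_Ω̄ > h(a) > h(r)`, then `lam` admits a `ξ`-illegal triple, i.e. `lam` is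
not `ξ`-regular. -/
theorem stmt0 (n l : ℕ) (hn : 1 ≤ n) (hl : 1 ≤ l) (lam : MP l) (p : Fin l → ZMod n)
    (ξ : Slope l) (ib : ZMod n) (r a : Node l)
    (hr : IsRem n l lam p ib r) (ha : IsAdd n l lam p ib a)
    (h1 : ξ.h r + ξ.xiO + ξ.xiObar > ξ.h a) (h2 : ξ.h a > ξ.h r) :
    (∃ (i j : ℕ) (s t : Fin l), Illegal n l lam p ξ i j s t) ∧
      ¬ Regular n l lam p ξ := by
  have hillegal : ∃ (i j : ℕ) (s t : Fin l), Illegal n l lam p ξ i j s t := by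
    have hcolor : colorOf n l p r = colorOf n l p a := hr.2.trans ha.2.symm
    rcases le_or_gt a.2.2 r.2.2 with hle | hlt
    · exact ⟨_, _, _, _, illegal_of_addable_col_le hr.1 ha.1 hcolor h2 h1 hle⟩
    · exact ⟨_, _, _, _, illegal_of_removable_col_lt hr.1 ha.1 hcolor h2 h1 hlt⟩
  exact ⟨hillegal, not_regular_iff_exists_illegal.2 hillegal⟩
end

section
/- Let ξ be an integral slope datum, let λ be a colored ℓ-multi-partition, let b be an addable node of λ of color ī, and let μ be the colored ℓ-multi-partition obtained from λ by adding the box b. Then Ψ(μ) = A_{ī, h^ξ(b)}^{−1} · Ψ(λ) in ℳ. (Lemma 8.2 of the paper.) -/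
/-!
Let `χ` be the indicator function of the diagram of `λ` extended by a row `0` and a column `0`. For
all `i, j ≥ 0` one has
`[(i+1,j+1) addable] - [(i,j) removable] = χ(i,j+1) + χ(i+1,j) - χ(i+1,j+1) - χ(i,j)`.
The right-hand side is linear in `χ`, so adding a box `b` changes the left-hand side, as a function
of the node `(i+1,j+1)`, by `δ_{b+(1,0)} + δ_{b+(0,1)} - δ_b - δ_{b+(1,1)}`. Since the shift by
`(1,1)` preserves the color and raises the height by `K`, the push-forward of that function along
`x ↦ (c̄(x), h(x))` is `Ψ(λ)`, and the push-forward of the change is `A⁻¹`.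
-/

open scoped Classical

/-- An integral slope datum: positive integer entries. -/
structure ZSlope (l : ℕ) where
  xiO : ℤ
  xiObar : ℤ
  xi : Fin l → ℤ
  xiO_pos : 0 < xiO
  xiObar_pos : 0 < xiObar
  xi_pos : ∀ k, 0 < xi k

namespace ZSlope

/-- The real slope datum underlying an integral slope datum. -/
noncomputable def toSlope {l : ℕ} (ξ : ZSlope l) : Slope l where
  xiO := (ξ.xiO : ℝ)
  xiObar := (ξ.xiObar : ℝ)
  xi := fun k => (ξ.xi k : ℝ)
  xiO_pos := by exact_mod_cast ξ.xiO_pos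
  xiObar_pos := by exact_mod_cast ξ.xiObar_pos
  xi_pos := fun k => by have := ξ.xi_pos k; positivity

/-- The (integer-valued) height `h^ξ(k;i,j) = ξ_k + ξ_Ω i + ξ_Ω̄ j`. -/
def h {l : ℕ} (ξ : ZSlope l) (x : Node l) : ℤ :=
  ξ.xi x.1 + ξ.xiO * (x.2.1 : ℤ) + ξ.xiObar * (x.2.2 : ℤ)

/-- `ξ` is aligned: `|ξ_s - ξ_t| < ξ_Ω + ξ_Ω̄` for all `s, t`. -/
def Aligned {l : ℕ} (ξ : ZSlope l) : Prop :=
  ∀ s t : Fin l, |ξ.xi s - ξ.xi t| < ξ.xiO + ξ.xiObar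

end ZSlope

/-- The group `ℳ` of Laurent monomials in the variables `Y_{ib,k}`, written additively:
a monomial is the finitely supported function recording its exponents. -/
abbrev Mon (n : ℕ) := (ZMod n × ℤ) →₀ ℤ

/-- The monomial `A_{ib,k} = Y_{ib,k} · Y_{ib,k+K} · Y_{ib+1,k+ξ_Ω̄}⁻¹ · Y_{ib-1,k+ξ_Ω}⁻¹`
(written additively), where `K = ξ_Ω + ξ_Ω̄`. -/
noncomputable def Amon (n : ℕ) (xiO xiObar : ℤ) (ib : ZMod n) (k : ℤ) : Mon n :=
  Finsupp.single (ib, k) 1 + Finsupp.single (ib, k + (xiO + xiObar)) 1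
    - Finsupp.single (ib + 1, k + xiObar) 1 - Finsupp.single (ib - 1, k + xiO) 1

/-- `Ψ(lam) = Π_{a ∈ A(lam)} Y_{c̄(a), h(a)} · Π_{r ∈ R(lam)} Y_{c̄(r), h(r)+K}⁻¹`
(written additively), where `K = ξ_Ω + ξ_Ω̄`. -/
noncomputable def Psi (n l : ℕ) (p : Fin l → ZMod n) (ξ : ZSlope l) (lam : MP l) : Mon n :=
  (∑ᶠ x : Node l, if (lam x.1).Addable x.2.1 x.2.2 then
      Finsupp.single (colorOf n l p x, ξ.h x) (1 : ℤ) else 0)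
  - (∑ᶠ x : Node l, if (lam x.1).Removable x.2.1 x.2.2 then
      Finsupp.single (colorOf n l p x, ξ.h x + (ξ.xiO + ξ.xiObar)) (1 : ℤ) else 0)

namespace Ptn

variable (q : Ptn) {i j : ℕ}

lemma row_succ (i : ℕ) : q.row (i + 1) = q.part i := rfl

lemma finite_setOf_addable : {x : ℕ × ℕ | q.Addable x.1 x.2}.Finite := by
  obtain ⟨N, hN⟩ := q.finite'
  refine ((Set.finite_Iic (N + 1)).image fun i => (i, q.row i + 1)).subset ?_
  rintro ⟨i, j⟩ ⟨-, hj, hrow, hprev⟩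
  dsimp only at hj hrow hprev
  have hi : i ≤ N + 1 := by
    by_contra! hlt
    have : q.row (i - 1) = 0 := hN _ (by omega)
    omega
  exact ⟨i, hi, Prod.ext rfl (by dsimp only; omega)⟩

lemma finite_setOf_removable : {x : ℕ × ℕ | q.Removable x.1 x.2}.Finite := by
  obtain ⟨N, hN⟩ := q.finite'
  refine ((Set.finite_Iic N).image fun i => (i, q.row i)).subset ?_
  rintro ⟨i, j⟩ ⟨-, hj, hrow, -⟩
  dsimp only at hj hrow
  have hi : i ≤ N := by
    by_contra! hlt
    have : q.row i = 0 := hN _ (by omega)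
    omega
  exact ⟨i, hi, Prod.ext rfl hrow⟩

lemma exists_part_eq_update (h : q.Addable i j) :
    ∃ q' : Ptn, ∀ m, q'.part m = if m = i - 1 then j else q.part m := by
  obtain ⟨hi, hj, hrow, hprev⟩ := h
  obtain ⟨N, hN⟩ := q.finite'
  refine ⟨⟨fun m => if m = i - 1 then j else q.part m, fun s t hst => ?_, max N i,
    fun m hm => ?_⟩, fun _ => rfl⟩
  · have hanti := q.antitone' s t hst
    unfold row at hrow hprev
    split_ifs with ht hs hs
    · exact le_rfl
    · have := q.antitone' s (i - 1 - 1) (by omega)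
      omega
    · subst hs
      omega
    · exact hanti
  · rw [if_neg (by omega)]
    exact hN m (by omega)

lemma addBox_part (h : q.Addable i j) (m : ℕ) :
    (q.addBox i j).part m = if m = i - 1 then j else q.part m := by
  have hex := q.exists_part_eq_update h
  rw [addBox, dif_pos hex]
  exact hex.choose_spec m

/-- The indicator function of the diagram of `q` bordered by a row `0` and a column `0`. Column `0`
is covered by `0 ≤ q.row i`. The border makes the two ends of the rim of `q` look like any other
part of it. -/
noncomputable def borderedIndicator (i j : ℕ) : ℤ := if i = 0 ∨ j ≤ q.row i then 1 else 0

lemma borderedIndicator_zero (j : ℕ) : q.borderedIndicator 0 j = 1 := by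
  simp [borderedIndicator]

lemma borderedIndicator_succ (i j : ℕ) :
    q.borderedIndicator (i + 1) j = if j ≤ q.part i then 1 else 0 := by
  simp [borderedIndicator, row_succ]

lemma borderedIndicator_addBox (h : q.Addable i j) (s t : ℕ) :
    (q.addBox i j).borderedIndicator s t =
      q.borderedIndicator s t + if (i, j) = (s, t) then 1 else 0 := by
  have ⟨hi, hj, hrow, _⟩ := h
  obtain ⟨i, rfl⟩ := Nat.exists_eq_add_of_le' hi
  cases s with
  | zero => simp [borderedIndicator_zero]
  | succ s =>
    simp only [borderedIndicator_succ, row_succ, q.addBox_part h, Nat.add_sub_cancel,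
      Prod.mk.injEq] at hrow ⊢
    rcases eq_or_ne s i with rfl | hne
    · simp only [if_true, true_and]
      split_ifs <;> omega
    · simp [hne, hne.symm]

lemma addable_sub_removable_eq_borderedIndicator (i j : ℕ) :
    ((if q.Addable (i + 1) (j + 1) then 1 else 0) - if q.Removable i j then 1 else 0 : ℤ) =
      q.borderedIndicator i (j + 1) + q.borderedIndicator (i + 1) j
        - q.borderedIndicator (i + 1) (j + 1) - q.borderedIndicator i j := by
  cases i with
  | zero =>
    have hadd : q.Addable 1 (j + 1) ↔ q.part 0 = j := by simp [Addable, row]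
    have hrem : ¬ q.Removable 0 j := by simp [Removable]
    simp only [zero_add, hadd, hrem, if_false, borderedIndicator_zero, q.borderedIndicator_succ 0]
    split_ifs <;> omega
  | succ i =>
    have hanti := q.antitone' i (i + 1) i.le_succ
    have hadd : q.Addable (i + 1 + 1) (j + 1) ↔ q.part (i + 1) = j ∧ j < q.part i := by
      simp [Addable, row]
    have hrem : q.Removable (i + 1) j ↔ q.part i = j ∧ q.part (i + 1) < j := by
      simp only [Removable, row, Nat.add_sub_cancel]
      omega
    simp only [hadd, hrem, borderedIndicator_succ]
    split_ifs <;> omega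

end Ptn

namespace Node

variable {l : ℕ}

/-- The translate `(k; i + s, j + t)` of the triple `(k; i, j)`. -/
def shift (x : Node l) (s t : ℕ) : Node l := (x.1, x.2.1 + s, x.2.2 + t)

lemma colorOf_shift {n : ℕ} (p : Fin l → ZMod n) (x : Node l) (s t : ℕ) :
    colorOf n l p (x.shift s t) = colorOf n l p x - s + t := by
  simp only [colorOf, shift, Nat.cast_add]
  ring

lemma h_shift (ξ : ZSlope l) (x : Node l) (s t : ℕ) :
    ξ.h (x.shift s t) = ξ.h x + (ξ.xiO * s + ξ.xiObar * t) := by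
  simp only [ZSlope.h, shift, Nat.cast_add]
  ring

/-- The alternating sum of the corners of the unit square at `x`, in the free abelian group on
nodes. The monomial `A` attached to `x` is its image. -/
noncomputable def unitSquare (x : Node l) : Node l →₀ ℤ :=
  Finsupp.single x 1 + Finsupp.single (x.shift 1 1) 1
    - Finsupp.single (x.shift 0 1) 1 - Finsupp.single (x.shift 1 0) 1

lemma unitSquare_apply_of_eq_zero {x : Node l} (hrow : 1 ≤ x.2.1) (hcol : 1 ≤ x.2.2) (k : Fin l)
    {i j : ℕ} (h : i = 0 ∨ j = 0) : x.unitSquare (k, i, j) = 0 := by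
  have hshift (s t : ℕ) : x.shift s t ≠ (k, i, j) := by
    simp only [shift, ne_eq, Prod.mk.injEq]
    omega
  have hself : x ≠ (k, i, j) := hshift 0 0
  simp [unitSquare, hshift, hself]

/-- The index `(c̄(x), h(x))` of the variable `Y` attached to the triple `x`. -/
def colorHeight {n : ℕ} (p : Fin l → ZMod n) (ξ : ZSlope l) (x : Node l) : ZMod n × ℤ :=
  (colorOf n l p x, ξ.h x)

lemma mapDomain_colorHeight_unitSquare {n : ℕ} (p : Fin l → ZMod n) (ξ : ZSlope l) (x : Node l) :
    Finsupp.mapDomain (colorHeight p ξ) x.unitSquare =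
      Amon n ξ.xiO ξ.xiObar (colorOf n l p x) (ξ.h x) := by
  simp [unitSquare, Amon, colorHeight, Finsupp.mapDomain_add, Finsupp.mapDomain_sub,
    Finsupp.mapDomain_single, colorOf_shift, h_shift]

end Node

namespace MP

variable {l : ℕ} (lam : MP l)

lemma finite_setOf_addable : {x : Node l | (lam x.1).Addable x.2.1 x.2.2}.Finite :=
  (Set.finite_iUnion fun k => (lam k).finite_setOf_addable.image (Prod.mk k)).subset
    fun x hx => Set.mem_iUnion.2 ⟨x.1, x.2, hx, rfl⟩

lemma finite_setOf_removable : {x : Node l | (lam x.1).Removable x.2.1 x.2.2}.Finite :=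
  (Set.finite_iUnion fun k => (lam k).finite_setOf_removable.image (Prod.mk k)).subset
    fun x hx => Set.mem_iUnion.2 ⟨x.1, x.2, hx, rfl⟩

/-- The addable nodes of `lam` minus the translates by `(1, 1)` of its removable nodes, as an
element of the free abelian group on nodes. -/
noncomputable def cornerDivisor : Node l →₀ ℤ :=
  ∑ x ∈ lam.finite_setOf_addable.toFinset, Finsupp.single x 1
    - ∑ x ∈ lam.finite_setOf_removable.toFinset, Finsupp.single (x.shift 1 1) 1

lemma cornerDivisor_apply_of_eq_zero (k : Fin l) {i j : ℕ} (h : i = 0 ∨ j = 0) :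
    lam.cornerDivisor (k, i, j) = 0 := by
  have hadd : ¬ (lam k).Addable i j := fun ⟨hi, hj, _⟩ => by omega
  have hshift (x : Node l) : x.shift 1 1 ≠ (k, i, j) := by
    simp only [Node.shift, ne_eq, Prod.mk.injEq]
    omega
  simp [cornerDivisor, Finsupp.single_apply, hadd, hshift]

lemma cornerDivisor_apply_succ_succ (k : Fin l) (i j : ℕ) :
    lam.cornerDivisor (k, i + 1, j + 1) =
      (if (lam k).Addable (i + 1) (j + 1) then 1 else 0)
        - if (lam k).Removable i j then 1 else 0 := by
  have hshift (x : Node l) : x.shift 1 1 = (k, i + 1, j + 1) ↔ x = (k, i, j) := by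
    simp [Node.shift, Prod.ext_iff]
  simp [cornerDivisor, Finsupp.single_apply, hshift]

lemma borderedIndicator_MPadd {b : Node l} (h : (lam b.1).Addable b.2.1 b.2.2)
    (k : Fin l) (i j : ℕ) :
    (MPadd lam b k).borderedIndicator i j =
      (lam k).borderedIndicator i j + if b = (k, i, j) then 1 else 0 := by
  obtain ⟨k₀, i₀, j₀⟩ := b
  rcases eq_or_ne k k₀ with rfl | hne
  · simp [MPadd, Ptn.borderedIndicator_addBox _ h]
  · simp [MPadd, hne, hne.symm]

lemma cornerDivisor_MPadd {b : Node l} (h : (lam b.1).Addable b.2.1 b.2.2) :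
    cornerDivisor (MPadd lam b) = lam.cornerDivisor - b.unitSquare := by
  ext ⟨k, i, j⟩
  by_cases hij : i = 0 ∨ j = 0
  · rw [Finsupp.sub_apply, Node.unitSquare_apply_of_eq_zero h.1 h.2.1 k hij,
      cornerDivisor_apply_of_eq_zero _ k hij, cornerDivisor_apply_of_eq_zero _ k hij, sub_zero]
  · obtain ⟨i, rfl⟩ := Nat.exists_eq_add_one_of_ne_zero (not_or.1 hij).1
    obtain ⟨j, rfl⟩ := Nat.exists_eq_add_one_of_ne_zero (not_or.1 hij).2
    obtain ⟨k₀, i₀, j₀⟩ := b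
    simp only [Finsupp.sub_apply, Finsupp.add_apply, cornerDivisor_apply_succ_succ,
      Ptn.addable_sub_removable_eq_borderedIndicator, lam.borderedIndicator_MPadd h,
      Node.unitSquare, Node.shift, Finsupp.single_apply, Prod.mk.injEq, add_zero,
      Nat.add_right_cancel_iff]
    ring

end MP

lemma Psi_eq_mapDomain_cornerDivisor {n l : ℕ} (p : Fin l → ZMod n) (ξ : ZSlope l) (lam : MP l) :
    Psi n l p ξ lam = Finsupp.mapDomain (Node.colorHeight p ξ) lam.cornerDivisor := by
  have hadd := finsum_mem_eq_finite_toFinset_sum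
    (fun x => Finsupp.single (colorOf n l p x, ξ.h x) (1 : ℤ)) lam.finite_setOf_addable
  have hrem := finsum_mem_eq_finite_toFinset_sum
    (fun x => Finsupp.single (colorOf n l p x, ξ.h x + (ξ.xiO + ξ.xiObar)) (1 : ℤ))
    lam.finite_setOf_removable
  simp only [Set.mem_ofPred_eq, finsum_eq_if] at hadd hrem
  simp [Psi, hadd, hrem, MP.cornerDivisor, Finsupp.mapDomain_sub, Finsupp.mapDomain_finsetSum,
    Finsupp.mapDomain_single, Node.colorHeight, Node.colorOf_shift, Node.h_shift]

/-- Lemma 8.2: if `mu` is obtained from `lam` by adding an addable box `b` of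
color `ib`, then `Ψ(mu) = A_{ib, h(b)}⁻¹ · Ψ(lam)` (written additively). -/
theorem stmt7 (n l : ℕ) (hn : 1 ≤ n) (hl : 1 ≤ l) (p : Fin l → ZMod n) (ξ : ZSlope l)
    (lam : MP l) (b : Node l) (hadd : (lam b.1).Addable b.2.1 b.2.2)
    (ib : ZMod n) (hcol : colorOf n l p b = ib) :
    Psi n l p ξ (MPadd lam b) = Psi n l p ξ lam - Amon n ξ.xiO ξ.xiObar ib (ξ.h b) := by
  rw [Psi_eq_mapDomain_cornerDivisor, Psi_eq_mapDomain_cornerDivisor, lam.cornerDivisor_MPadd hadd,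
    Finsupp.mapDomain_sub, Node.mapDomain_colorHeight_unitSquare, hcol]
end

section
/- Fix integers n ≥ 2 and ℓ ≥ 1. For every irrational real number z with 1/(n−1) < z < n−1, there exists a slope datum ξ = (ξ_Ω, ξ_Ω̄, ξ_1, …, ξ_ℓ) which is both general and aligned and satisfies ξ_Ω/ξ_Ω̄ = z. -/
/-!
Normalise `ξ_Ω̄ = 1` and `ξ_Ω = z`. Two nodes in the same component have distinct heights because
`z` is irrational. Nodes in different components `s`, `t` can only have equal heights if `ξ_s` and
`ξ_t` agree modulo the subgroup `ℤ z + ℤ` of `ℝ`. This subgroup is countable, so the uncountable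
interval `(0, z + 1)` meets infinitely many of its cosets, and the `ξ_k` can be taken from
different ones; lying in an interval of length `z + 1`, they are automatically aligned.
-/

open scoped Classical

section CountableSubgroup

variable {G : Type*} [AddGroup G] (A : AddSubgroup G) [Countable A]

theorem countable_preimage_quotientAddGroup_mk {T : Set (G ⧸ A)} (hT : T.Countable) :
    ((QuotientAddGroup.mk : G → G ⧸ A) ⁻¹' T).Countable := by
  have : Countable T := hT
  exact (QuotientAddGroup.preimageMkEquivAddSubgroupProdSet A T).injective.countable

theorem not_countable_image_quotientAddGroup_mk {S : Set G} (hS : ¬ S.Countable) :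
    ¬ ((QuotientAddGroup.mk : G → G ⧸ A) '' S).Countable := fun himage =>
  hS <| (countable_preimage_quotientAddGroup_mk A himage).mono <| Set.subset_preimage_image _ S

theorem exists_seq_mem_injective_quotientAddGroup_mk {S : Set G} (hS : ¬ S.Countable) :
    ∃ f : ℕ → G, (∀ k, f k ∈ S) ∧ Function.Injective fun k => (f k : G ⧸ A) := by
  have hinf : ((QuotientAddGroup.mk : G → G ⧸ A) '' S).Infinite := fun hfin =>
    not_countable_image_quotientAddGroup_mk A hS hfin.countable
  let q := hinf.natEmbedding
  choose f hfS hfq using fun k => (q k).2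
  have hq : Function.Injective fun k => (q k : G ⧸ A) := Subtype.val_injective.comp q.injective
  exact ⟨f, hfS, by simpa only [hfq] using hq⟩

end CountableSubgroup

theorem countable_addSubgroup_closure_pair {G : Type*} [AddCommGroup G] (a b : G) :
    Countable (AddSubgroup.closure {a, b}) := by
  have hsub : (AddSubgroup.closure {a, b} : Set G) ⊆
      Set.range fun p : ℤ × ℤ => p.1 • a + p.2 • b := fun _ hx =>
    let ⟨m, n, hmn⟩ := AddSubgroup.mem_closure_pair.1 hx
    ⟨(m, n), hmn⟩
  exact (Set.countable_range _).mono hsub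

theorem injective_mul_add_mul_of_irrational_div {a b : ℝ} (hab : Irrational (a / b)) :
    Function.Injective fun p : ℤ × ℤ => a * p.1 + b * p.2 := by
  have hb : b ≠ 0 := (div_ne_zero_iff.1 hab.ne_zero).2
  rintro ⟨i, j⟩ ⟨i', j'⟩ (h : a * i + b * j = a * i' + b * j')
  have hi : i = i' := by
    by_contra hne
    have hsub : ((i - i' : ℤ) : ℝ) ≠ 0 := Int.cast_ne_zero.2 (sub_ne_zero.2 hne)
    refine (irrational_iff_ne_rational _).1 hab (j' - j) (i - i') (sub_ne_zero.2 hne) ?_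
    rw [div_eq_div_iff hb hsub]
    push_cast
    linarith
  subst hi
  have hj : (j : ℝ) = j' := mul_left_cancel₀ hb (add_left_cancel h)
  rw [Int.cast_inj.1 hj]

namespace Slope

variable {l : ℕ} {ξ : Slope l}

theorem general_of_irrational_of_injective_mk (hirr : Irrational (ξ.xiO / ξ.xiObar))
    (hxi : Function.Injective fun k => (ξ.xi k : ℝ ⧸ AddSubgroup.closure {ξ.xiO, ξ.xiObar})) :
    ξ.General := by
  rintro ⟨k, i, j⟩ ⟨k', i', j'⟩ - - - - h
  simp only [Slope.h] at h
  have hk : k = k' := by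
    refine hxi (QuotientAddGroup.eq.2 (AddSubgroup.mem_closure_pair.2 ⟨i - i', j - j', ?_⟩))
    simp only [zsmul_eq_mul]
    push_cast
    linarith
  subst hk
  have hij : ((i, j) : ℤ × ℤ) = ((i' : ℤ), (j' : ℤ)) := by
    refine injective_mul_add_mul_of_irrational_div hirr ?_
    push_cast
    linarith
  simpa using hij

theorem aligned_of_forall_xi_lt (hxi : ∀ k, ξ.xi k < ξ.xiO + ξ.xiObar) : ξ.Aligned := fun s t =>
  abs_sub_lt_of_nonneg_of_lt (ξ.xi_pos s).le (hxi s) (ξ.xi_pos t).le (hxi t)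

end Slope

theorem stmt13_general (l : ℕ) (z : ℝ) (hz : Irrational z) (hz0 : 0 < z) :
    ∃ ξ : Slope l, ξ.General ∧ ξ.Aligned ∧ ξ.xiO / ξ.xiObar = z := by
  have hcount : Countable (AddSubgroup.closure {z, 1}) := countable_addSubgroup_closure_pair z 1
  have hIoo : ¬ (Set.Ioo 0 (z + 1)).Countable := Cardinal.Real.Ioo_countable_iff.not.2 (by linarith)
  obtain ⟨f, hf, hinj⟩ :=
    exists_seq_mem_injective_quotientAddGroup_mk (AddSubgroup.closure {z, 1}) hIoo
  let ξ : Slope l := ⟨z, 1, fun k => f k, hz0, one_pos, fun k => (hf k).1⟩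
  have hratio : ξ.xiO / ξ.xiObar = z := div_one z
  refine ⟨ξ, ?_, Slope.aligned_of_forall_xi_lt fun k => (hf k).2, hratio⟩
  exact Slope.general_of_irrational_of_injective_mk (hratio ▸ hz) (hinj.comp Fin.val_injective)

/-- for every irrational `z` with `1/(n−1) < z < n−1` there is a general aligned
slope datum with `ξ_Ω / ξ_Ω̄ = z`. -/
theorem stmt13 (n l : ℕ) (hn : 2 ≤ n) (hl : 1 ≤ l) (z : ℝ) (hz : Irrational z)
    (hz1 : 1 / ((n : ℝ) - 1) < z) (hz2 : z < (n : ℝ) - 1) :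
    ∃ ξ : Slope l, ξ.General ∧ ξ.Aligned ∧ ξ.xiO / ξ.xiObar = z := by
  have hn1 : (0 : ℝ) < n - 1 := sub_pos.2 (by exact_mod_cast hn)
  exact stmt13_general l z hz ((one_div_pos.2 hn1).trans hz1)
end
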